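/- Let N ≥ 1, 0 < s < 1, and let u ∈ C^{2σ}(ℝ^N) ∩ L_s(ℝ^N) for some σ > s satisfy (-Δ)^s u(x) = e^{u(x)} for all x ∈ ℝ^N. Then with η(x) = (1+|x|²)^{-(N+2s)/2}, there exists a constant C > 0 depending only on N and s such that ∫_{ℝ^N} e^{u(x)} η(x) dx < C ∫_{ℝ^N} |u(x)| η(x) dx. -/

import Mathlib

/-!
The weight `η` is used as a test function. Let `L_ε` be the fractional Laplacian with the singular
kernel truncated to `|x - ξ| > ε` (and without its constant `c = c_{N,s}`).

* The truncated kernel is even and bounded by a multiple of `η`, and `η * η ≤ C η`, so Fubini gives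
  `∫ (L_ε u) η = ∫ u (L_ε η)` as soon as `u η` is integrable (`integral_truncLap_mul`).
* `|L_ε η| ≤ A η` with `A` independent of `ε ≤ 1` (`abs_truncLap_fracEta_le`). For `|h| > 1` this is
  again `η * η ≤ C η`. For `|h| ≤ 1` only symmetric second differences matter, because the kernel is
  even, and those of `η` are `O(η(x) |h|²)`, while `|h|^{2-N-2s}` is integrable near `0`.
* The same symmetrisation applied to `u ∈ C^{2σ}`, whose second differences are `O(|h|^{2σ})` with
  `2σ > 2s`, shows that `|L_ε u - L_1 u|` is bounded by a constant (`abs_truncLap_sub_le`). Hence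
  `(L_ε u) η` is dominated by an integrable function and `c ∫ (L_ε u) η → ∫ e^u η`.

Together, `e^u η` is integrable and `∫ e^u η ≤ c A ∫ |u| η`. The left side is positive, so the
inequality becomes strict with the constant `c A + 1`.
-/

open MeasureTheory Filter Set

noncomputable section

/-- Euclidean space `ℝ^N`. -/
abbrev ES (N : ℕ) := EuclideanSpace ℝ (Fin N)

/-- The normalization constant `c_{N,s}` of the fractional Laplacian. -/
def fracC (N : ℕ) (s : ℝ) : ℝ :=
  2 ^ (2 * s) * s * Real.Gamma ((N : ℝ) / 2 + s) /
    (Real.pi ^ ((N : ℝ) / 2) * Real.Gamma (1 - s))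

/-- `HasFracLapAt N s u x v` means that the principal-value limit defining
`(-Δ)^s u (x)` exists and equals `v`:
`(-Δ)^s u (x) = c_{N,s} lim_{ε→0⁺} ∫_{ℝ^N ∖ B(x,ε)} (u x - u ξ)/|x-ξ|^{N+2s} dξ`. -/
def HasFracLapAt (N : ℕ) (s : ℝ) (u : ES N → ℝ) (x : ES N) (v : ℝ) : Prop :=
  Filter.Tendsto
    (fun ε : ℝ => fracC N s *
      ∫ ξ in {ξ : ES N | ε < ‖x - ξ‖}, (u x - u ξ) / ‖x - ξ‖ ^ ((N : ℝ) + 2 * s))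
    (nhdsWithin 0 (Set.Ioi 0)) (nhds v)

/-- The weight function `η(x) = (1+|x|²)^{-(N+2s)/2}`. -/
def fracEta (N : ℕ) (s : ℝ) (x : ES N) : ℝ :=
  (1 + ‖x‖ ^ 2) ^ (-(((N : ℝ) + 2 * s) / 2))

/-- `ρ_m(x) = (1+|x|²)^{-m/2}`. -/
def fracRho (N : ℕ) (m : ℝ) (x : ES N) : ℝ :=
  (1 + ‖x‖ ^ 2) ^ (-(m / 2))

/-- Membership in `L_s(ℝ^N)`: locally integrable with
`∫ |u(x)|/(1+|x|)^{N+2s} dx < ∞`. -/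
def MemLs (N : ℕ) (s : ℝ) (u : ES N → ℝ) : Prop :=
  MeasureTheory.LocallyIntegrable u volume ∧
    MeasureTheory.Integrable
      (fun x : ES N => |u x| / (1 + ‖x‖) ^ ((N : ℝ) + 2 * s)) volume

/-- Membership in the Hölder space `C^β(ℝ^N)` for `0 < β < 2`:
Hölder continuity of exponent `β` if `β ≤ 1`, and a Hölder continuous
derivative of exponent `β - 1` if `β > 1`. -/
def MemCHolder {N : ℕ} (β : ℝ) (u : ES N → ℝ) : Prop :=
  (β ≤ 1 → ∃ C : NNReal, HolderWith C β.toNNReal u) ∧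
  (1 < β → Differentiable ℝ u ∧
    ∃ C : NNReal, HolderWith C (β - 1).toNNReal (fderiv ℝ u))

/-- A solution of `(-Δ)^s u = e^u` on `ℝ^N`: a function
`u ∈ C^{2σ}(ℝ^N) ∩ L_s(ℝ^N)` for some `σ > s` satisfying the equation
pointwise. -/
def IsSolution (N : ℕ) (s : ℝ) (u : ES N → ℝ) : Prop :=
  (∃ σ : ℝ, s < σ ∧ MemCHolder (2 * σ) u) ∧ MemLs N s u ∧
    ∀ x : ES N, HasFracLapAt N s u x (Real.exp (u x))

/-- Stability: `∫ e^u φ² ≤ (c_{N,s}/2) ∬ (φ(x)-φ(y))²/|x-y|^{N+2s}` for all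
`φ ∈ C¹_c(ℝ^N)`. -/
def IsStable (N : ℕ) (s : ℝ) (u : ES N → ℝ) : Prop :=
  ∀ φ : ES N → ℝ, ContDiff ℝ 1 φ → HasCompactSupport φ →
    ∫ x : ES N, Real.exp (u x) * φ x ^ 2 ≤
      fracC N s / 2 *
        ∫ x : ES N, ∫ y : ES N, (φ x - φ y) ^ 2 / ‖x - y‖ ^ ((N : ℝ) + 2 * s)

/-- Surface area `|S^{N-1}| = 2 π^{N/2} / Γ(N/2)` of the unit sphere in `ℝ^N`. -/
def sphArea (N : ℕ) : ℝ :=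
  2 * Real.pi ^ ((N : ℝ) / 2) / Real.Gamma ((N : ℝ) / 2)

/-- The normalization constant `p(N,s)` of the Poisson kernel. -/
def poissonC (N : ℕ) (s : ℝ) : ℝ :=
  Real.Gamma (((N : ℝ) + 2 * s) / 2) / (Real.pi ^ ((N : ℝ) / 2) * Real.Gamma s)

/-- The Poisson kernel `P_s(x,t) = p(N,s) t^{2s} / (|x|²+t²)^{(N+2s)/2}`. -/
def poissonKer (N : ℕ) (s : ℝ) (x : ES N) (t : ℝ) : ℝ :=
  poissonC N s * t ^ (2 * s) / (‖x‖ ^ 2 + t ^ 2) ^ (((N : ℝ) + 2 * s) / 2)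

/-- The Caffarelli–Silvestre extension `U(x,t) = ∫ P_s(x-z,t) u(z) dz`. -/
def csExtension (N : ℕ) (s : ℝ) (u : ES N → ℝ) (x : ES N) (t : ℝ) : ℝ :=
  ∫ z : ES N, poissonKer N s (x - z) t * u z

/-- `ζ(x,t) = (1+|x|²+t²)^{-(N+2s)/4}`. -/
def csZeta (N : ℕ) (s : ℝ) (x : ES N) (t : ℝ) : ℝ :=
  (1 + ‖x‖ ^ 2 + t ^ 2) ^ (-(((N : ℝ) + 2 * s) / 4))

/-- The squared (full) gradient `|∇F|²(x,t) = |∇_x F|² + |∂_t F|²` of a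
function `F` on `ℝ^N × ℝ`. -/
def gradSqr (N : ℕ) (F : ES N → ℝ → ℝ) (x : ES N) (t : ℝ) : ℝ :=
  ‖fderiv ℝ (fun y => F y t) x‖ ^ 2 + (deriv (F x) t) ^ 2

/-! ### The weight `η` -/

theorem fracEta_pos (N : ℕ) (s : ℝ) (x : ES N) : 0 < fracEta N s x := by
  unfold fracEta; positivity

theorem continuous_fracEta (N : ℕ) (s : ℝ) : Continuous (fracEta N s) := by
  unfold fracEta
  exact Continuous.rpow_const (by fun_prop) fun x => Or.inl (by positivity)

theorem fracEta_neg (N : ℕ) (s : ℝ) (x : ES N) : fracEta N s (-x) = fracEta N s x := by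
  simp [fracEta]

theorem integrable_fracEta (N : ℕ) (s : ℝ) (hs0 : 0 < s) : Integrable (fracEta N s) := by
  have h := integrable_rpow_neg_one_add_norm_sq (E := ES N) (μ := volume)
    (r := (N : ℝ) + 2 * s) (by simp; linarith)
  refine h.congr (Eventually.of_forall fun x => ?_)
  simp only [fracEta, neg_div]

/-- If `1 + |y|²` is at most `a (1 + |x|²)`, then `η(x) ≤ a^{(N+2s)/2} η(y)`. -/
theorem fracEta_le_of (N : ℕ) (s : ℝ) (hs0 : 0 < s) {x y : ES N} {a : ℝ} (ha : 0 ≤ a)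
    (h : 1 + ‖y‖ ^ 2 ≤ a * (1 + ‖x‖ ^ 2)) :
    fracEta N s x ≤ a ^ (((N : ℝ) + 2 * s) / 2) * fracEta N s y := by
  have hp : 0 < ((N : ℝ) + 2 * s) / 2 := by positivity
  set p := ((N : ℝ) + 2 * s) / 2
  have hx : 0 < 1 + ‖x‖ ^ 2 := by positivity
  have hy : 0 < 1 + ‖y‖ ^ 2 := by positivity
  have h1 : (1 + ‖y‖ ^ 2) ^ p ≤ a ^ p * (1 + ‖x‖ ^ 2) ^ p := by
    rw [← Real.mul_rpow ha hx.le]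
    exact Real.rpow_le_rpow hy.le h hp.le
  show (1 + ‖x‖ ^ 2) ^ (-p) ≤ a ^ p * (1 + ‖y‖ ^ 2) ^ (-p)
  rw [Real.rpow_neg hx.le, Real.rpow_neg hy.le, inv_eq_one_div, ← div_eq_mul_inv,
    div_le_div_iff₀ (by positivity) (by positivity)]
  linarith

/-- Peetre's inequality, in the form needed to integrate against translates of `η`. -/
theorem fracEta_translate (N : ℕ) (s : ℝ) (hs0 : 0 < s) (x ξ : ES N) :
    fracEta N s (x - ξ) ≤ (2 * (1 + ‖x‖ ^ 2)) ^ (((N : ℝ) + 2 * s) / 2) * fracEta N s ξ := by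
  refine fracEta_le_of N s hs0 (by positivity) ?_
  have h : ‖ξ‖ ≤ ‖x‖ + ‖x - ξ‖ := by
    calc ‖ξ‖ = ‖x - (x - ξ)‖ := by simp
      _ ≤ _ := norm_sub_le _ _
  nlinarith [norm_nonneg ξ, norm_nonneg x, norm_nonneg (x - ξ), sq_nonneg (‖x‖ - ‖x - ξ‖),
    sq_nonneg (‖x‖ * ‖x - ξ‖), pow_le_pow_left₀ (norm_nonneg ξ) h 2]

/-- `η(z) η(w) ≤ C η(z + w) (η(z) + η(w))`: at least one of `z`, `w` has norm at least
`|z + w| / 2`. This makes `η * η` bounded by a multiple of `η`. -/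
theorem fracEta_mul_le (N : ℕ) (s : ℝ) (hs0 : 0 < s) (z w : ES N) :
    fracEta N s z * fracEta N s w ≤
      4 ^ (((N : ℝ) + 2 * s) / 2) * fracEta N s (z + w) * (fracEta N s z + fracEta N s w) := by
  have hz := fracEta_pos N s z
  have hw := fracEta_pos N s w
  have hzw := fracEta_pos N s (z + w)
  have hn := norm_add_le z w
  have hsq := pow_le_pow_left₀ (norm_nonneg _) hn 2
  have hc : (0 : ℝ) < 4 ^ (((N : ℝ) + 2 * s) / 2) := by positivity
  have hcz := mul_pos hc hzw
  rcases le_total ‖z‖ ‖w‖ with h | h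
  · have := fracEta_le_of N s hs0 (x := w) (y := z + w) (a := 4) (by norm_num)
      (by nlinarith [norm_nonneg z, norm_nonneg w])
    nlinarith
  · have := fracEta_le_of N s hs0 (x := z) (y := z + w) (a := 4) (by norm_num)
      (by nlinarith [norm_nonneg z, norm_nonneg w])
    nlinarith

/-! ### The truncated operator and its symmetry -/

/-- The kernel `|z|^{-(N+2s)}` of the fractional Laplacian, cut off to `|z| > ε`. -/
def truncKer (N : ℕ) (s ε : ℝ) (z : ES N) : ℝ :=
  {z : ES N | ε < ‖z‖}.indicator (fun z => (‖z‖ ^ ((N : ℝ) + 2 * s))⁻¹) z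

theorem truncKer_nonneg (N : ℕ) (s ε : ℝ) (z : ES N) : 0 ≤ truncKer N s ε z :=
  indicator_nonneg (fun z _ => by positivity) z

theorem truncKer_neg (N : ℕ) (s ε : ℝ) (z : ES N) : truncKer N s ε (-z) = truncKer N s ε z := by
  simp [truncKer, indicator]

theorem measurable_truncKer (N : ℕ) (s ε : ℝ) : Measurable (truncKer N s ε) := by
  unfold truncKer
  refine Measurable.indicator (by fun_prop) ?_
  exact measurableSet_lt measurable_const measurable_norm

theorem truncKer_le (N : ℕ) (s : ℝ) (hs0 : 0 < s) {ε : ℝ} (hε : 0 < ε) (z : ES N) :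
    truncKer N s ε z ≤ (ε⁻¹ ^ 2 + 1) ^ (((N : ℝ) + 2 * s) / 2) * fracEta N s z := by
  have hη := fracEta_pos N s z
  by_cases h : ε < ‖z‖
  · have hz : 0 < ‖z‖ := hε.trans h
    simp only [truncKer, indicator, mem_ofPred_eq, h, if_true, fracEta]
    have hle : 1 + ‖z‖ ^ 2 ≤ (ε⁻¹ ^ 2 + 1) * ‖z‖ ^ 2 := by
      have : 1 ≤ ε⁻¹ ^ 2 * ‖z‖ ^ 2 := by
        rw [← mul_pow, inv_mul_eq_div]
        exact one_le_pow₀ ((one_le_div hε).2 h.le)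
      linarith
    set p := ((N : ℝ) + 2 * s) / 2 with hp
    have hp0 : 0 < p := by positivity
    have h1 : (1 + ‖z‖ ^ 2) ^ p ≤ (ε⁻¹ ^ 2 + 1) ^ p * ‖z‖ ^ ((N : ℝ) + 2 * s) := by
      have : ‖z‖ ^ ((N : ℝ) + 2 * s) = (‖z‖ ^ 2) ^ p := by
        rw [← Real.rpow_natCast, ← Real.rpow_mul hz.le, hp]; congr 1; push_cast; ring
      rw [this, ← Real.mul_rpow (by positivity) (by positivity)]
      exact Real.rpow_le_rpow (by positivity) hle hp0.le
    rw [Real.rpow_neg (by positivity), inv_eq_one_div, ← div_eq_mul_inv,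
      div_le_div_iff₀ (by positivity) (by positivity)]
    linarith
  · simp only [truncKer, indicator, mem_ofPred_eq, h, if_false]
    positivity

theorem integrable_truncKer (N : ℕ) (s : ℝ) (hs0 : 0 < s) {ε : ℝ} (hε : 0 < ε) :
    Integrable (truncKer N s ε) := by
  refine ((integrable_fracEta N s hs0).const_mul
    ((ε⁻¹ ^ 2 + 1) ^ (((N : ℝ) + 2 * s) / 2))).mono'
    (measurable_truncKer N s ε).aestronglyMeasurable (Eventually.of_forall fun z => ?_)
  rw [Real.norm_of_nonneg (truncKer_nonneg N s ε z)]
  exact truncKer_le N s hs0 hε z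

/-- The truncated fractional Laplacian, without its normalization constant. -/
def truncLap (N : ℕ) (s ε : ℝ) (f : ES N → ℝ) (x : ES N) : ℝ :=
  ∫ ξ, (f x - f ξ) * truncKer N s ε (x - ξ)

theorem truncLap_eq (N : ℕ) (s ε : ℝ) (f : ES N → ℝ) (x : ES N) :
    ∫ ξ in {ξ : ES N | ε < ‖x - ξ‖}, (f x - f ξ) / ‖x - ξ‖ ^ ((N : ℝ) + 2 * s) =
      truncLap N s ε f x := by
  rw [← integral_indicator (measurableSet_lt measurable_const (by fun_prop))]
  unfold truncLap
  congr 1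
  ext ξ
  by_cases h : ε < ‖x - ξ‖ <;> simp [truncKer, indicator, h, div_eq_mul_inv]

theorem aestronglyMeasurable_of_mul_fracEta {N : ℕ} {s : ℝ} {f : ES N → ℝ}
    (hf : Integrable fun x => f x * fracEta N s x) : AEStronglyMeasurable f volume := by
  have h := hf.aestronglyMeasurable.mul
    ((continuous_fracEta N s).inv₀ fun x => (fracEta_pos N s x).ne').aestronglyMeasurable
  refine h.congr (Eventually.of_forall fun x => ?_)
  have := (fracEta_pos N s x).ne'
  simp only [Pi.mul_apply, Pi.inv_apply]
  field_simp

theorem integrable_mul_truncKer (N : ℕ) (s : ℝ) (hs0 : 0 < s) {ε : ℝ} (hε : 0 < ε)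
    {f : ES N → ℝ} (hf : Integrable fun x => f x * fracEta N s x) (x : ES N) :
    Integrable fun ξ => f ξ * truncKer N s ε (x - ξ) := by
  have hm := aestronglyMeasurable_of_mul_fracEta hf
  refine (hf.norm.const_mul ((ε⁻¹ ^ 2 + 1) ^ (((N : ℝ) + 2 * s) / 2) *
    (2 * (1 + ‖x‖ ^ 2)) ^ (((N : ℝ) + 2 * s) / 2))).mono' (hm.mul
    ((measurable_truncKer N s ε).comp (measurable_const.sub measurable_id)).aestronglyMeasurable)
    (Eventually.of_forall fun ξ => ?_)
  rw [norm_mul, norm_mul, Real.norm_of_nonneg (truncKer_nonneg N s ε _),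
    Real.norm_of_nonneg (fracEta_pos N s _).le]
  have h1 := truncKer_le N s hs0 hε (x - ξ)
  have h2 := fracEta_translate N s hs0 x ξ
  calc ‖f ξ‖ * truncKer N s ε (x - ξ)
      ≤ ‖f ξ‖ * ((ε⁻¹ ^ 2 + 1) ^ (((N : ℝ) + 2 * s) / 2) *
        ((2 * (1 + ‖x‖ ^ 2)) ^ (((N : ℝ) + 2 * s) / 2) * fracEta N s ξ)) := by
        gcongr
        exact h1.trans (by gcongr)
    _ = _ := by ring

/-- Joint integrability of the diagonal term of `η(x) (f(x) - f(ξ)) k_ε(x - ξ)`. -/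
theorem integrable_prod_diag (N : ℕ) (s : ℝ) (hs0 : 0 < s) {ε : ℝ} (hε : 0 < ε)
    {f : ES N → ℝ} (hf : Integrable fun x => f x * fracEta N s x) :
    Integrable (fun q : ES N × ES N => f q.1 * fracEta N s q.1 * truncKer N s ε (q.1 - q.2))
      (volume.prod volume) := by
  have h := (hf.convolution_integrand (ContinuousLinearMap.mul ℝ ℝ)
    (integrable_truncKer N s hs0 hε)).swap
  refine h.congr (Eventually.of_forall fun q => ?_)
  simp only [Function.comp, Prod.swap, ContinuousLinearMap.mul_apply']
  rw [← truncKer_neg N s ε (q.1 - q.2), neg_sub]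

/-- Joint integrability of the off-diagonal term of `η(x) (f(x) - f(ξ)) k_ε(x - ξ)`. -/
theorem integrable_prod_off (N : ℕ) (s : ℝ) (hs0 : 0 < s) {ε : ℝ} (hε : 0 < ε)
    {f : ES N → ℝ} (hf : Integrable fun x => f x * fracEta N s x) :
    Integrable (fun q : ES N × ES N => f q.2 * fracEta N s q.1 * truncKer N s ε (q.1 - q.2))
      (volume.prod volume) := by
  have hm := aestronglyMeasurable_of_mul_fracEta hf
  have hη := integrable_fracEta N s hs0
  have hA := hf.norm.convolution_integrand (ContinuousLinearMap.mul ℝ ℝ) hη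
  have hB := (hf.norm.mul_prod hη).swap
  refine ((hA.add hB).const_mul ((ε⁻¹ ^ 2 + 1) ^ (((N : ℝ) + 2 * s) / 2) *
    4 ^ (((N : ℝ) + 2 * s) / 2))).mono' ?_ (Eventually.of_forall fun q => ?_)
  · refine ((hm.comp_snd).mul
      ((continuous_fracEta N s).comp continuous_fst).aestronglyMeasurable).mul ?_
    exact ((measurable_truncKer N s ε).comp
      (measurable_fst.sub measurable_snd)).aestronglyMeasurable
  · obtain ⟨x, ξ⟩ := q
    have h1 := truncKer_le N s hs0 hε (x - ξ)
    have h2 := fracEta_mul_le N s hs0 x (ξ - x)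
    rw [← neg_sub x ξ, fracEta_neg, neg_sub, add_sub_cancel] at h2
    have hx := fracEta_pos N s x
    simp only [Pi.add_apply, Function.comp, Prod.swap, ContinuousLinearMap.mul_apply', norm_mul,
      Real.norm_of_nonneg (truncKer_nonneg N s ε _), Real.norm_of_nonneg (fracEta_pos N s _).le]
    calc ‖f ξ‖ * fracEta N s x * truncKer N s ε (x - ξ)
        ≤ ‖f ξ‖ * fracEta N s x *
          ((ε⁻¹ ^ 2 + 1) ^ (((N : ℝ) + 2 * s) / 2) * fracEta N s (x - ξ)) := by gcongr
      _ = ‖f ξ‖ * (ε⁻¹ ^ 2 + 1) ^ (((N : ℝ) + 2 * s) / 2) *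
          (fracEta N s x * fracEta N s (x - ξ)) := by ring
      _ ≤ ‖f ξ‖ * (ε⁻¹ ^ 2 + 1) ^ (((N : ℝ) + 2 * s) / 2) *
          (4 ^ (((N : ℝ) + 2 * s) / 2) * fracEta N s ξ *
            (fracEta N s x + fracEta N s (x - ξ))) := by gcongr
      _ = _ := by ring

theorem integrable_self_sub_mul (N : ℕ) (s : ℝ) (hs0 : 0 < s) {ε : ℝ} (hε : 0 < ε)
    {f : ES N → ℝ} (hf : Integrable fun x => f x * fracEta N s x) (x : ES N) :
    Integrable fun ξ => (f x - f ξ) * truncKer N s ε (x - ξ) := by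
  have h1 := ((integrable_truncKer N s hs0 hε).comp_sub_left x).const_mul (f x)
  refine (h1.sub (integrable_mul_truncKer N s hs0 hε hf x)).congr (Eventually.of_forall fun ξ => ?_)
  simp only [Pi.sub_apply]; ring

theorem integrable_truncLap_mul (N : ℕ) (s : ℝ) (hs0 : 0 < s) {ε : ℝ} (hε : 0 < ε)
    {f : ES N → ℝ} (hf : Integrable fun x => f x * fracEta N s x) :
    Integrable fun x => truncLap N s ε f x * fracEta N s x := by
  refine ((integrable_prod_diag N s hs0 hε hf).sub
    (integrable_prod_off N s hs0 hε hf)).integral_prod_left.congr (Eventually.of_forall fun x => ?_)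
  simp only [truncLap, ← integral_mul_const, Pi.sub_apply]
  congr 1; ext ξ; ring

/-- The truncated fractional Laplacian is symmetric: the kernel is even, so Fubini moves it
from `f` onto `η`. -/
theorem integral_truncLap_mul (N : ℕ) (s : ℝ) (hs0 : 0 < s) {ε : ℝ} (hε : 0 < ε)
    {f : ES N → ℝ} (hf : Integrable fun x => f x * fracEta N s x) :
    ∫ x, truncLap N s ε f x * fracEta N s x = ∫ x, f x * truncLap N s ε (fracEta N s) x := by
  have hd := integrable_prod_diag N s hs0 hε hf
  have ho := integrable_prod_off N s hs0 hε hf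
  have hos : Integrable (fun q : ES N × ES N =>
      f q.1 * fracEta N s q.2 * truncKer N s ε (q.1 - q.2)) (volume.prod volume) := by
    refine ho.swap.congr (Eventually.of_forall fun q => ?_)
    simp only [Function.comp, Prod.swap]
    rw [← truncKer_neg N s ε (q.1 - q.2), neg_sub]
  have hsw : ∫ q : ES N × ES N, f q.2 * fracEta N s q.1 * truncKer N s ε (q.1 - q.2)
      ∂(volume.prod volume) = ∫ q : ES N × ES N,
        f q.1 * fracEta N s q.2 * truncKer N s ε (q.1 - q.2) ∂(volume.prod volume) := by
    rw [← integral_prod_swap]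
    congr 1; ext q
    simp only [Prod.fst_swap, Prod.snd_swap]
    rw [← truncKer_neg N s ε (q.1 - q.2), neg_sub]
  calc ∫ x, truncLap N s ε f x * fracEta N s x
      = ∫ q : ES N × ES N, (f q.1 * fracEta N s q.1 * truncKer N s ε (q.1 - q.2) -
          f q.2 * fracEta N s q.1 * truncKer N s ε (q.1 - q.2)) ∂(volume.prod volume) := by
        refine Eq.trans ?_ (integral_prod _ (hd.sub ho)).symm
        congr 1; ext x
        simp only [truncLap, Pi.sub_apply, ← integral_mul_const]
        congr 1; ext ξ; ring
    _ = ∫ q : ES N × ES N, (f q.1 * fracEta N s q.1 * truncKer N s ε (q.1 - q.2) -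
          f q.1 * fracEta N s q.2 * truncKer N s ε (q.1 - q.2)) ∂(volume.prod volume) := by
        rw [integral_sub hd ho, integral_sub hd hos, hsw]
    _ = ∫ x, f x * truncLap N s ε (fracEta N s) x := by
        refine (integral_prod _ (hd.sub hos)).trans ?_
        congr 1; ext x
        simp only [truncLap, Pi.sub_apply, ← integral_const_mul]
        congr 1; ext ξ; ring

/-! ### Second differences -/

theorem integrableOn_norm_rpow (N : ℕ) (hN : 1 ≤ N) {r : ℝ} (hr : -(N : ℝ) < r) :
    IntegrableOn (fun h : ES N => ‖h‖ ^ r) {h | ‖h‖ ≤ 1} := by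
  have hm : MeasurableSet {h : ES N | ‖h‖ ≤ 1} :=
    measurableSet_le measurable_norm measurable_const
  have : Nonempty (Fin N) := ⟨⟨0, hN⟩⟩
  rw [← integrable_indicator_iff hm]
  have key := (integrable_fun_norm_addHaar (volume : Measure (ES N))
    (f := (Iic (1 : ℝ)).indicator fun t => t ^ r)).2 ?_
  · exact key
  · have h1 : IntegrableOn (fun t : ℝ => t ^ (r + (N - 1 : ℕ))) (Ioc 0 1) := by
      rw [← intervalIntegrable_iff_integrableOn_Ioc_of_le zero_le_one]
      refine intervalIntegral.intervalIntegrable_rpow' ?_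
      push_cast [hN]; linarith
    rw [← integrable_indicator_iff measurableSet_Ioc] at h1
    rw [← integrable_indicator_iff measurableSet_Ioi]
    refine h1.congr (Eventually.of_forall fun t => ?_)
    by_cases h0 : 0 < t <;> by_cases h2 : t ≤ 1 <;>
      simp [indicator, h0, h2, Real.rpow_add, mul_comm]

/-- The contribution of `|h| ≤ 1` to the fractional Laplacian of a function whose symmetric
second differences are at most `|h|^β`. -/
def nearConst (N : ℕ) (s β : ℝ) : ℝ :=
  ∫ h in {h : ES N | ‖h‖ ≤ 1}, ‖h‖ ^ (β - ((N : ℝ) + 2 * s))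

/-- Since the kernel is even, the part of the truncated fractional Laplacian coming from
`ε < |h| ≤ 1` sees only symmetric second differences; if those are `O(|h|^β)` with `β > 2s`,
it is bounded uniformly in `ε`. -/
theorem abs_truncLap_sub_le (N : ℕ) (hN : 1 ≤ N) (s : ℝ) (hs0 : 0 < s) {ε β M : ℝ} (hε : 0 < ε)
    (hε1 : ε ≤ 1) (hβ : 2 * s < β) (hM : 0 ≤ M) {f : ES N → ℝ}
    (hf : Integrable fun x => f x * fracEta N s x) (x : ES N)
    (hx : ∀ h : ES N, ‖h‖ ≤ 1 → |f (x + h) + f (x - h) - 2 * f x| ≤ M * ‖h‖ ^ β) :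
    |truncLap N s ε f x - truncLap N s 1 f x| ≤ M * nearConst N s β := by
  set κ : ES N → ℝ := fun h => truncKer N s ε h - truncKer N s 1 h with hκ
  have hκneg : ∀ h, κ (-h) = κ h := fun h => by simp [hκ, truncKer_neg]
  have hi : Integrable fun ξ => (f x - f ξ) * κ (x - ξ) := by
    refine ((integrable_self_sub_mul N s hs0 hε hf x).sub
      (integrable_self_sub_mul N s hs0 one_pos hf x)).congr (Eventually.of_forall fun ξ => ?_)
    simp only [Pi.sub_apply, hκ]; ring
  have hD : truncLap N s ε f x - truncLap N s 1 f x = ∫ ξ, (f x - f ξ) * κ (x - ξ) := by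
    unfold truncLap
    rw [← integral_sub (integrable_self_sub_mul N s hs0 hε hf x)
      (integrable_self_sub_mul N s hs0 one_pos hf x)]
    congr 1; ext ξ; simp only [hκ]; ring
  have hi1 : Integrable fun h => (f x - f (x - h)) * κ h := by
    refine (hi.comp_sub_left x).congr (Eventually.of_forall fun h => ?_)
    simp
  have hi2 : Integrable fun h => (f x - f (x + h)) * κ h := by
    refine hi1.comp_neg.congr (Eventually.of_forall fun h => ?_)
    simp [hκneg]
  have hD1 : truncLap N s ε f x - truncLap N s 1 f x = ∫ h, (f x - f (x - h)) * κ h := by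
    rw [hD, ← integral_sub_left_eq_self _ volume x]
    simp
  have hD2 : truncLap N s ε f x - truncLap N s 1 f x = ∫ h, (f x - f (x + h)) * κ h := by
    rw [hD1, ← integral_neg_eq_self]
    simp [hκneg]
  have hsum : 2 * (truncLap N s ε f x - truncLap N s 1 f x) =
      ∫ h, -(f (x + h) + f (x - h) - 2 * f x) * κ h := by
    rw [two_mul]
    nth_rw 1 [hD1]
    rw [hD2, ← integral_add hi1 hi2]
    congr 1; ext h; ring
  have hm : MeasurableSet {h : ES N | ‖h‖ ≤ 1} :=
    measurableSet_le measurable_norm measurable_const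
  have hnear : IntegrableOn (fun h : ES N => ‖h‖ ^ (β - ((N : ℝ) + 2 * s))) {h | ‖h‖ ≤ 1} :=
    integrableOn_norm_rpow N hN (by linarith)
  have hbound : |∫ h, -(f (x + h) + f (x - h) - 2 * f x) * κ h| ≤
      ∫ h, M * {h : ES N | ‖h‖ ≤ 1}.indicator (fun h => ‖h‖ ^ (β - ((N : ℝ) + 2 * s))) h := by
    rw [← Real.norm_eq_abs]
    refine norm_integral_le_of_norm_le ((hnear.integrable_indicator hm).const_mul M)
      (Eventually.of_forall fun h => ?_)
    rw [norm_mul, norm_neg, Real.norm_eq_abs, Real.norm_eq_abs]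
    by_cases h1 : ‖h‖ ≤ 1
    · by_cases h2 : ε < ‖h‖
      · have h0 : 0 < ‖h‖ := hε.trans h2
        have h3 : ¬ 1 < ‖h‖ := not_lt.2 h1
        have : κ h = (‖h‖ ^ ((N : ℝ) + 2 * s))⁻¹ := by simp [hκ, truncKer, indicator, h2, h3]
        rw [this, abs_of_pos (show 0 < (‖h‖ ^ ((N : ℝ) + 2 * s))⁻¹ by positivity)]
        simp only [indicator, mem_ofPred_eq, h1, if_true]
        rw [Real.rpow_sub h0, div_eq_mul_inv, ← mul_assoc]
        gcongr
        exact hx h h1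
      · have h3 : ¬ 1 < ‖h‖ := not_lt.2 h1
        have : κ h = 0 := by simp [hκ, truncKer, indicator, h2, h3]
        rw [this, abs_zero, mul_zero]
        exact mul_nonneg hM (indicator_nonneg (fun h _ => by positivity) h)
    · have h2 : ε < ‖h‖ := hε1.trans_lt (not_le.1 h1)
      have : κ h = 0 := by simp [hκ, truncKer, indicator, h2, not_le.1 h1]
      rw [this]; simp [indicator, h1]
  rw [integral_const_mul, integral_indicator hm, ← hsum, abs_mul, abs_two] at hbound
  have := abs_nonneg (truncLap N s ε f x - truncLap N s 1 f x)
  show _ ≤ M * ∫ h in {h : ES N | ‖h‖ ≤ 1}, ‖h‖ ^ (β - ((N : ℝ) + 2 * s))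
  linarith

/-- Second differences on `[-1, 1]` are controlled by the oscillation of the derivative. -/
theorem abs_second_diff_le {q dq : ℝ → ℝ} (hq : ∀ t, HasDerivAt q (dq t) t) {M : ℝ}
    (hM : ∀ t, |t| ≤ 1 → |dq t - dq 0| ≤ M) : |q 1 + q (-1) - 2 * q 0| ≤ 2 * M := by
  have key := fun x y => Convex.norm_image_sub_le_of_norm_hasDerivWithin_le (x := x) (y := y)
    (f := fun t => q t - t * dq 0) (f' := fun t => dq t - dq 0) (s := Icc (-1) 1) (C := M)
    (fun t _ => by
      have := ((hq t).sub ((hasDerivAt_id t).mul_const (dq 0))).hasDerivWithinAt (s := Icc (-1) 1)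
      rw [one_mul] at this
      exact this)
    (fun t ht => hM t (abs_le.2 ht)) (convex_Icc _ _)
  have h1 := key 0 1 (by simp) (by simp)
  have h2 := key 0 (-1) (by simp) (by simp)
  simp only [Real.norm_eq_abs] at h1 h2
  norm_num at h1 h2
  rw [abs_le] at h1 h2 ⊢
  constructor <;> linarith [h1.1, h1.2, h2.1, h2.2]

/-- Second differences of `η` at scale `|h| ≤ 1` are `O(η(x) |h|²)`: along a segment,
`|∂²η| ≤ C |h|² η`, and `η` varies by at most a bounded factor on the unit ball. -/
theorem fracEta_second_diff (N : ℕ) (s : ℝ) (hs0 : 0 < s) : ∃ A : ℝ, 0 ≤ A ∧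
    ∀ x h : ES N, ‖h‖ ≤ 1 →
      |fracEta N s (x + h) + fracEta N s (x - h) - 2 * fracEta N s x| ≤
        A * fracEta N s x * ‖h‖ ^ (2 : ℝ) := by
  set p := ((N : ℝ) + 2 * s) / 2 with hp
  have hp0 : 0 < p := by positivity
  refine ⟨2 * ((4 * p * (p + 1) + 2 * p) * 3 ^ p), by positivity, fun x h hh => ?_⟩
  set a : ℝ → ℝ := fun t => 1 + ‖x + t • h‖ ^ 2 with ha
  have ha0 : ∀ t, 0 < a t := fun t => by simp only [ha]; positivity
  set b : ℝ → ℝ := fun t => 2 * inner ℝ (x + t • h) h with hb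
  have hda : ∀ t, HasDerivAt a (b t) t := fun t => by
    have h1 : HasDerivAt (fun t : ℝ => x + t • h) h t := by
      simpa using ((hasDerivAt_id t).smul_const h).const_add x
    simpa [ha, hb] using h1.norm_sq.const_add 1
  have hdb : ∀ t, HasDerivAt b (2 * ‖h‖ ^ 2) t := fun t => by
    have h1 : HasDerivAt (fun t : ℝ => 2 * (inner ℝ x h + t * ‖h‖ ^ 2)) (2 * ‖h‖ ^ 2) t := by
      simpa using (((hasDerivAt_id t).mul_const (‖h‖ ^ 2)).const_add (inner ℝ x h)).const_mul 2
    refine h1.congr_of_eventuallyEq (Eventually.of_forall fun t => ?_)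
    simp [hb, inner_add_left, inner_smul_left]
  have hq : ∀ t, HasDerivAt (fun t => a t ^ (-p)) (b t * (-p) * a t ^ (-p - 1)) t := fun t =>
    (hda t).rpow_const (Or.inl (ha0 t).ne')
  have hdq : ∀ t, HasDerivAt (fun t => b t * (-p) * a t ^ (-p - 1))
      (2 * ‖h‖ ^ 2 * (-p) * a t ^ (-p - 1) +
        b t * (-p) * (b t * (-p - 1) * a t ^ (-p - 1 - 1))) t := fun t =>
    ((hdb t).mul_const (-p)).mul ((hda t).rpow_const (Or.inl (ha0 t).ne'))
  have hcmp : ∀ t, |t| ≤ 1 → a t ^ (-p) ≤ 3 ^ p * fracEta N s x := fun t ht => by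
    refine fracEta_le_of N s hs0 (x := x + t • h) (y := x) (a := 3) (by norm_num) ?_
    have h1 : ‖x‖ ≤ ‖x + t • h‖ + 1 := by
      calc ‖x‖ = ‖x + t • h - t • h‖ := by simp
        _ ≤ ‖x + t • h‖ + ‖t • h‖ := norm_sub_le _ _
        _ ≤ _ := by
          rw [norm_smul, Real.norm_eq_abs]
          gcongr
          exact mul_le_one₀ ht (norm_nonneg _) hh
    nlinarith [norm_nonneg x, norm_nonneg (x + t • h), sq_nonneg (‖x + t • h‖ - 1),
      pow_le_pow_left₀ (norm_nonneg x) h1 2]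
  have hbnd : ∀ t, |t| ≤ 1 → |2 * ‖h‖ ^ 2 * (-p) * a t ^ (-p - 1) +
        b t * (-p) * (b t * (-p - 1) * a t ^ (-p - 1 - 1))| ≤
        (4 * p * (p + 1) + 2 * p) * 3 ^ p * fracEta N s x * ‖h‖ ^ 2 := fun t ht => by
    have hat := ha0 t
    have ha1 : 1 ≤ a t := by simp only [ha]; linarith [sq_nonneg ‖x + t • h‖]
    have hb2 : b t ^ 2 ≤ 4 * ‖h‖ ^ 2 * a t := by
      have h1 := abs_real_inner_le_norm (x + t • h) h
      have h2 : b t ^ 2 = 4 * |inner ℝ (x + t • h) h| ^ 2 := by simp only [hb, sq_abs]; ring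
      have h3 := pow_le_pow_left₀ (abs_nonneg _) h1 2
      rw [h2]; simp only [ha]; nlinarith [sq_nonneg ‖h‖]
    have e1 : a t ^ (-p - 1) = a t ^ (-p) / a t := Real.rpow_sub_one hat.ne' _
    have e2 : a t ^ (-p - 1 - 1) = a t ^ (-p) / a t / a t := by
      rw [Real.rpow_sub_one hat.ne', e1]
    have hE : 0 < a t ^ (-p) := by positivity
    have hle1 : a t ^ (-p) / a t ≤ a t ^ (-p) := div_le_self hE.le ha1
    have hle2 : b t ^ 2 * (a t ^ (-p) / a t / a t) ≤ 4 * ‖h‖ ^ 2 * a t ^ (-p) := by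
      calc b t ^ 2 * (a t ^ (-p) / a t / a t)
          ≤ 4 * ‖h‖ ^ 2 * a t * (a t ^ (-p) / a t / a t) := by gcongr
        _ = 4 * ‖h‖ ^ 2 * (a t ^ (-p) / a t) := by field_simp
        _ ≤ _ := by gcongr
    have hmain : |2 * ‖h‖ ^ 2 * (-p) * a t ^ (-p - 1) +
        b t * (-p) * (b t * (-p - 1) * a t ^ (-p - 1 - 1))| ≤
        (4 * p * (p + 1) + 2 * p) * ‖h‖ ^ 2 * a t ^ (-p) := by
      rw [e1, e2]
      have e3 : 2 * ‖h‖ ^ 2 * (-p) * (a t ^ (-p) / a t) +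
          b t * (-p) * (b t * (-p - 1) * (a t ^ (-p) / a t / a t)) =
          p * (p + 1) * (b t ^ 2 * (a t ^ (-p) / a t / a t)) -
            2 * p * ‖h‖ ^ 2 * (a t ^ (-p) / a t) := by ring
      rw [e3]
      refine (abs_sub _ _).trans ?_
      rw [abs_of_nonneg (by positivity), abs_of_nonneg (by positivity)]
      have i1 := mul_le_mul_of_nonneg_left hle2 (by positivity : 0 ≤ p * (p + 1))
      have i2 := mul_le_mul_of_nonneg_left hle1 (by positivity : 0 ≤ 2 * p * ‖h‖ ^ 2)
      linarith
    have i3 := mul_le_mul_of_nonneg_left (hcmp t ht)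
      (by positivity : 0 ≤ (4 * p * (p + 1) + 2 * p) * ‖h‖ ^ 2)
    linarith
  have hfin := abs_second_diff_le hq
    (M := (4 * p * (p + 1) + 2 * p) * 3 ^ p * fracEta N s x * ‖h‖ ^ 2) (fun t ht => by
      have hpos := fracEta_pos N s x
      have := Convex.norm_image_sub_le_of_norm_hasDerivWithin_le
        (s := Icc (-1 : ℝ) 1) (fun t _ => (hdq t).hasDerivWithinAt)
        (fun t ht => hbnd t (abs_le.2 ht)) (convex_Icc _ _) (x := 0) (y := t)
        (by simp) (abs_le.1 ht)
      refine (this.trans ?_)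
      rw [sub_zero, Real.norm_eq_abs]
      exact mul_le_of_le_one_right (by positivity) ht)
  have hr : ‖h‖ ^ (2 : ℝ) = ‖h‖ ^ 2 := by norm_cast
  have g1 : a 1 ^ (-p) = fracEta N s (x + h) := by simp [ha, fracEta, hp]
  have g2 : a (-1) ^ (-p) = fracEta N s (x - h) := by simp [ha, fracEta, hp, sub_eq_add_neg]
  have g3 : a 0 ^ (-p) = fracEta N s x := by simp [ha, fracEta, hp]
  rw [g1, g2, g3] at hfin
  rw [hr]
  linarith

/-! ### Bounds for `η` and regularity of solutions -/

/-- The truncated fractional Laplacians of `η` are bounded by a multiple of `η`,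
uniformly in the truncation. -/
theorem abs_truncLap_fracEta_le (N : ℕ) (hN : 1 ≤ N) (s : ℝ) (hs0 : 0 < s) (hs1 : s < 1) :
    ∃ A : ℝ, 0 ≤ A ∧ ∀ ε : ℝ, 0 < ε → ε ≤ 1 → ∀ x : ES N,
      |truncLap N s ε (fracEta N s) x| ≤ A * fracEta N s x := by
  obtain ⟨A, hA0, hA⟩ := fracEta_second_diff N s hs0
  have hη := integrable_fracEta N s hs0
  have hηη : Integrable fun x : ES N => fracEta N s x * fracEta N s x := by
    refine hη.mono' ((continuous_fracEta N s).mul (continuous_fracEta N s)).aestronglyMeasurable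
      (Eventually.of_forall fun x => ?_)
    have h0 := fracEta_pos N s x
    have h1 : fracEta N s x ≤ 1 :=
      Real.rpow_le_one_of_one_le_of_nonpos (by linarith [sq_nonneg ‖x‖])
        (by rw [neg_nonpos]; positivity)
    rw [Real.norm_of_nonneg (by positivity)]
    nlinarith
  set I := ∫ x, fracEta N s x with hI
  have hI0 : 0 ≤ I := integral_nonneg fun x => (fracEta_pos N s x).le
  set K := (((1 : ℝ))⁻¹ ^ 2 + 1) ^ (((N : ℝ) + 2 * s) / 2) with hK
  have hK0 : 0 ≤ K := by positivity
  set J := ∫ z, truncKer N s 1 z with hJ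
  have hJ0 : 0 ≤ J := integral_nonneg fun z => truncKer_nonneg N s 1 z
  set n := nearConst N s 2 with hn
  have hn0 : 0 ≤ n := integral_nonneg fun h => by positivity
  set Q := (4 : ℝ) ^ (((N : ℝ) + 2 * s) / 2) with hQ
  have hQ0 : 0 ≤ Q := by positivity
  refine ⟨A * n + J + K * Q * (I + I), by positivity, fun ε hε hε1 x => ?_⟩
  have hx := fracEta_pos N s x
  have h1 := abs_truncLap_sub_le N hN s hs0 hε hε1 (β := 2) (M := A * fracEta N s x)
    (by linarith) (by positivity) hηη x (hA x)
  have e1 : truncLap N s 1 (fracEta N s) x =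
      fracEta N s x * J - ∫ ξ, fracEta N s ξ * truncKer N s 1 (x - ξ) := by
    rw [hJ, ← integral_sub_left_eq_self (truncKer N s 1) volume x, ← integral_const_mul,
      ← integral_sub (((integrable_truncKer N s hs0 one_pos).comp_sub_left x).const_mul _)
        (integrable_mul_truncKer N s hs0 one_pos hηη x)]
    unfold truncLap
    congr 1; ext ξ; ring
  have h2 : ∫ ξ, fracEta N s ξ * truncKer N s 1 (x - ξ) ≤ K * Q * fracEta N s x * (I + I) := by
    have hr : ∫ ξ, K * Q * fracEta N s x * (fracEta N s ξ + fracEta N s (x - ξ)) =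
        K * Q * fracEta N s x * (I + I) := by
      rw [integral_const_mul, integral_add hη (hη.comp_sub_left x),
        integral_sub_left_eq_self (fracEta N s) volume x]
    rw [← hr]
    refine integral_mono (integrable_mul_truncKer N s hs0 one_pos hηη x)
      ((hη.add (hη.comp_sub_left x)).const_mul _) fun ξ => ?_
    have i1 := truncKer_le N s hs0 one_pos (x - ξ)
    have i2 := fracEta_mul_le N s hs0 ξ (x - ξ)
    rw [add_sub_cancel] at i2
    have hξ := fracEta_pos N s ξ
    calc fracEta N s ξ * truncKer N s 1 (x - ξ)
        ≤ fracEta N s ξ * (K * fracEta N s (x - ξ)) := by gcongr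
      _ = K * (fracEta N s ξ * fracEta N s (x - ξ)) := by ring
      _ ≤ K * (Q * fracEta N s x * (fracEta N s ξ + fracEta N s (x - ξ))) := by gcongr
      _ = _ := by ring
  have h3 : 0 ≤ ∫ ξ, fracEta N s ξ * truncKer N s 1 (x - ξ) :=
    integral_nonneg fun ξ => mul_nonneg (fracEta_pos N s ξ).le (truncKer_nonneg N s 1 _)
  have h4 : 0 ≤ fracEta N s x * J := by positivity
  rw [e1] at h1
  rw [abs_le] at h1 ⊢
  constructor <;> linarith [h1.1, h1.2]

theorem continuous_of_memCHolder {N : ℕ} {β : ℝ} (hβ : 0 < β) {u : ES N → ℝ}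
    (hu : MemCHolder β u) : Continuous u := by
  rcases le_or_gt β 1 with h | h
  · obtain ⟨C, hC⟩ := hu.1 h
    exact hC.continuous (by simpa using hβ)
  · exact (hu.2 h).1.continuous

/-- A function of class `C^β` has second differences `O(|h|^β)`, uniformly in space. -/
theorem second_diff_of_memCHolder {N : ℕ} {β : ℝ} (hβ : 0 < β) {u : ES N → ℝ}
    (hu : MemCHolder β u) : ∃ M : ℝ, 0 ≤ M ∧ ∀ x h : ES N,
      |u (x + h) + u (x - h) - 2 * u x| ≤ M * ‖h‖ ^ β := by
  rcases le_or_gt β 1 with hb | hb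
  · obtain ⟨C, hC⟩ := hu.1 hb
    refine ⟨2 * C, by positivity, fun x h => ?_⟩
    have h1 := hC.dist_le (x + h) x
    have h2 := hC.dist_le (x - h) x
    simp only [dist_eq_norm, add_sub_cancel_left, sub_sub_cancel_left, norm_neg,
      Real.coe_toNNReal _ hβ.le, Real.norm_eq_abs (u _ - u _)] at h1 h2
    rw [abs_le] at h1 h2 ⊢
    constructor <;> linarith [h1.1, h1.2, h2.1, h2.2]
  · obtain ⟨hd, C, hC⟩ := hu.2 hb
    refine ⟨2 * C, by positivity, fun x h => ?_⟩
    have hq : ∀ t : ℝ, HasDerivAt (fun t : ℝ => u (x + t • h)) (fderiv ℝ u (x + t • h) h) t :=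
      fun t => by
        have h1 : HasDerivAt (fun t : ℝ => x + t • h) h t := by
          simpa using ((hasDerivAt_id t).smul_const h).const_add x
        exact (hd _).hasFDerivAt.comp_hasDerivAt t h1
    have := abs_second_diff_le hq (M := C * ‖h‖ ^ β) fun t ht => by
      have h1 := hC.dist_le (x + t • h) (x + (0 : ℝ) • h)
      rw [Real.coe_toNNReal _ (by linarith), dist_eq_norm, dist_eq_norm] at h1
      have h2 : ‖x + t • h - (x + (0 : ℝ) • h)‖ ≤ ‖h‖ := by
        simp only [zero_smul, add_zero, add_sub_cancel_left, norm_smul, Real.norm_eq_abs]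
        exact mul_le_of_le_one_left (norm_nonneg _) ht
      rw [← Real.norm_eq_abs, ← sub_apply]
      refine (ContinuousLinearMap.le_opNorm _ _).trans ?_
      calc _ ≤ C * ‖h‖ ^ (β - 1) * ‖h‖ := by
            gcongr
            refine h1.trans ?_
            gcongr
        _ = C * ‖h‖ ^ β := by
            rcases eq_or_ne ‖h‖ 0 with h0 | h0
            · rw [h0, Real.zero_rpow hβ.ne']; simp
            · rw [Real.rpow_sub_one h0]; field_simp
    simpa [sub_eq_add_neg, mul_assoc] using this

theorem integrable_mul_fracEta {N : ℕ} {s : ℝ} (hs0 : 0 < s) {u : ES N → ℝ}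
    (hu : MemLs N s u) : Integrable fun x => u x * fracEta N s x := by
  refine (hu.2.const_mul (2 ^ (((N : ℝ) + 2 * s) / 2))).mono'
    (hu.1.aestronglyMeasurable.mul (continuous_fracEta N s).aestronglyMeasurable)
    (Eventually.of_forall fun x => ?_)
  rw [norm_mul, Real.norm_of_nonneg (fracEta_pos N s x).le, Real.norm_eq_abs]
  set p := ((N : ℝ) + 2 * s) / 2 with hp
  have hp0 : 0 < p := by positivity
  have h1 : (1 + ‖x‖) ^ ((N : ℝ) + 2 * s) ≤ 2 ^ p * (1 + ‖x‖ ^ 2) ^ p := by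
    have : (1 + ‖x‖) ^ ((N : ℝ) + 2 * s) = ((1 + ‖x‖) ^ 2) ^ p := by
      rw [← Real.rpow_natCast, ← Real.rpow_mul (by positivity), hp]; congr 1; push_cast; ring
    rw [this, ← Real.mul_rpow (by positivity) (by positivity)]
    exact Real.rpow_le_rpow (by positivity) (by nlinarith [sq_nonneg (1 - ‖x‖)]) hp0.le
  have h2 : fracEta N s x ≤ 2 ^ p / (1 + ‖x‖) ^ ((N : ℝ) + 2 * s) := by
    show (1 + ‖x‖ ^ 2) ^ (-p) ≤ _
    rw [Real.rpow_neg (by positivity), inv_eq_one_div,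
      div_le_div_iff₀ (by positivity) (by positivity)]
    linarith
  calc |u x| * fracEta N s x ≤ |u x| * (2 ^ p / (1 + ‖x‖) ^ ((N : ℝ) + 2 * s)) := by gcongr
    _ = _ := by ring

theorem fracC_pos (N : ℕ) (s : ℝ) (hs0 : 0 < s) (hs1 : s < 1) : 0 < fracC N s := by
  have h1 : 0 < Real.Gamma ((N : ℝ) / 2 + s) := Real.Gamma_pos_of_pos (by positivity)
  have h2 : 0 < Real.Gamma (1 - s) := Real.Gamma_pos_of_pos (by linarith)
  have := Real.pi_pos
  unfold fracC
  positivity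

/-! ### The integral estimate -/

/-- For every solution `u` of `(-Δ)^s u = e^u`,
`∫ e^u η < C ∫ |u| η` with `C = C(N,s) > 0`. -/
theorem exp_integral_bound (N : ℕ) (hN : 1 ≤ N) (s : ℝ) (hs0 : 0 < s) (hs1 : s < 1) :
    ∃ C : ℝ, 0 < C ∧ ∀ u : ES N → ℝ, IsSolution N s u →
      ∫ x : ES N, Real.exp (u x) * fracEta N s x <
        C * ∫ x : ES N, |u x| * fracEta N s x := by
  obtain ⟨A, hA0, hA⟩ := abs_truncLap_fracEta_le N hN s hs0 hs1
  have hc := fracC_pos N s hs0 hs1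
  refine ⟨fracC N s * A + 1, by positivity, fun u hu => ?_⟩
  obtain ⟨⟨σ, hσ, hH⟩, hL, hsol⟩ := hu
  have hβ : 0 < 2 * σ := by linarith
  have hcont := continuous_of_memCHolder hβ hH
  obtain ⟨M, hM0, hM⟩ := second_diff_of_memCHolder hβ hH
  have hi := integrable_mul_fracEta hs0 hL
  have hiabs : Integrable fun x => |u x| * fracEta N s x := by
    refine hi.norm.congr (Eventually.of_forall fun x => ?_)
    simp only [norm_mul, Real.norm_eq_abs, abs_of_pos (fracEta_pos N s x)]
  set l := nhdsWithin (0 : ℝ) (Ioi 0) with hl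
  have hev : ∀ᶠ ε in l, 0 < ε ∧ ε ≤ 1 := by
    filter_upwards [Ioc_mem_nhdsGT (zero_lt_one (α := ℝ))] with ε h using h
  set F : ℝ → ES N → ℝ := fun ε x => fracC N s * (truncLap N s ε u x * fracEta N s x) with hF
  have hlim : ∀ x, Tendsto (fun ε => F ε x) l (nhds (Real.exp (u x) * fracEta N s x)) :=
    fun x => by
      have := (hsol x).mul_const (fracEta N s x)
      refine this.congr fun ε => ?_
      rw [truncLap_eq, hF]; ring
  -- An `ε`-independent integrable majorant: the part `|h| > 1` plus a constant multiple of `η`.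
  set B : ES N → ℝ := fun x => fracC N s * (|truncLap N s 1 u x * fracEta N s x| +
    M * nearConst N s (2 * σ) * fracEta N s x) with hB
  have hBi : Integrable B :=
    ((integrable_truncLap_mul N s hs0 one_pos hi).abs.add
      ((integrable_fracEta N s hs0).const_mul _)).const_mul _
  have hFB : ∀ ε, 0 < ε → ε ≤ 1 → ∀ x, ‖F ε x‖ ≤ B x := fun ε h0 h1 x => by
    have hx := fracEta_pos N s x
    have h2 := abs_truncLap_sub_le N hN s hs0 h0 h1 (β := 2 * σ) (by linarith) hM0 hi x
      fun h _ => hM x h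
    rw [Real.norm_eq_abs, hF, hB]
    simp only [abs_mul, abs_of_pos hc, abs_of_pos hx, ← add_mul]
    gcongr
    calc |truncLap N s ε u x|
        = |truncLap N s 1 u x + (truncLap N s ε u x - truncLap N s 1 u x)| := by congr 1; ring
      _ ≤ |truncLap N s 1 u x| + |truncLap N s ε u x - truncLap N s 1 u x| := abs_add_le _ _
      _ ≤ _ := by gcongr
  have hFi : ∀ ε, 0 < ε → Integrable (F ε) := fun ε h0 =>
    (integrable_truncLap_mul N s hs0 h0 hi).const_mul _
  have hexp : Integrable fun x => Real.exp (u x) * fracEta N s x := by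
    refine hBi.mono' ((Real.continuous_exp.comp hcont).mul
      (continuous_fracEta N s)).aestronglyMeasurable (Eventually.of_forall fun x => ?_)
    refine le_of_tendsto (hlim x).norm ?_
    filter_upwards [hev] with ε h using hFB ε h.1 h.2 x
  have hT : Tendsto (fun ε => ∫ x, F ε x) l (nhds (∫ x, Real.exp (u x) * fracEta N s x)) := by
    refine tendsto_integral_filter_of_dominated_convergence B ?_ ?_ hBi
      (Eventually.of_forall hlim)
    · filter_upwards [hev] with ε h using (hFi ε h.1).aestronglyMeasurable
    · filter_upwards [hev] with ε h using Eventually.of_forall (hFB ε h.1 h.2)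
  -- The bound holds for each truncation, after moving the operator onto `η`.
  have hle : ∫ x, Real.exp (u x) * fracEta N s x ≤
      fracC N s * A * ∫ x, |u x| * fracEta N s x := by
    refine le_of_tendsto hT ?_
    filter_upwards [hev] with ε h
    rw [hF, integral_const_mul, integral_truncLap_mul N s hs0 h.1 hi, mul_assoc,
      ← integral_const_mul A]
    refine mul_le_mul_of_nonneg_left ?_ hc.le
    refine (le_abs_self _).trans ?_
    rw [← Real.norm_eq_abs]
    refine norm_integral_le_of_norm_le (hiabs.const_mul A) (Eventually.of_forall fun x => ?_)
    rw [norm_mul, Real.norm_eq_abs, Real.norm_eq_abs]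
    have := mul_le_mul_of_nonneg_left (hA ε h.1 h.2 x) (abs_nonneg (u x))
    linarith
  have hpos : 0 < ∫ x, Real.exp (u x) * fracEta N s x := by
    have hp : ∀ x, 0 < Real.exp (u x) * fracEta N s x := fun x =>
      mul_pos (Real.exp_pos _) (fracEta_pos N s x)
    rw [integral_pos_iff_support_of_nonneg (fun x => (hp x).le) hexp]
    have : (Function.support fun x => Real.exp (u x) * fracEta N s x) = univ := by
      ext x; simpa using (hp x).ne'
    rw [this]
    exact isOpen_univ.measure_pos volume univ_nonempty
  -- Positivity of `∫ e^u η` forces `∫ |u| η > 0`, which makes the inequality strict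
  -- once the constant is enlarged by `1`.
  have hI : 0 < ∫ x, |u x| * fracEta N s x := by
    by_contra hcon
    have : fracC N s * A * ∫ x, |u x| * fracEta N s x ≤ 0 :=
      mul_nonpos_of_nonneg_of_nonpos (by positivity) (not_lt.1 hcon)
    linarith
  linarith
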